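/- Let $A$ be an alphabet. Positions of a word $u\in A^*$ are $1,\dots,|u|$, and $i$ is an $a$-position of $u$ if $u[i]=a$. A ranker is a nonempty word over the alphabet $\{\mathsf X_a,\mathsf Y_a : a\in A\}$. For $0\le q\le |u|+1$, $\mathsf X_a(u,q)$ is the least $a$-position of $u$ strictly greater than $q$, and $\mathsf Y_a(u,q)$ is the greatest $a$-position of $u$ strictly less than $q$ (undefined if there is none). Rankers are evaluated from left to right: $(r'\mathsf Z)(u,q)=\mathsf Z(u,r'(u,q))$; and $r(u)=r(u,0)$ if $r$ starts with an $\mathsf X$-letter, $r(u)=r(u,|u|+1)$ if $r$ starts with a $\mathsf Y$-letter; $r$ is defined on $u$ if $r(u)$ exists. The depth of $r$ is its length; a block of $r$ is a maximal factor consisting only of $\mathsf X$-letters or only of $\mathsf Y$-letters. $R^{\mathsf X}_{m,n}$ (resp. $R^{\mathsf Y}_{m,n}$) is the set of rankers with exactly $m$ blocks and depth $n$ whose first block is an $\mathsf X$-block (resp. a $\mathsf Y$-block); $\underline R^{\mathsf X}_{m,n}=\bigcup_{m'\le m,\,n'\le n}R^{\mathsf X}_{m',n'}\cup\bigcup_{m'<m,\,n'<n}R^{\mathsf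 Y}_{m',n'}$, and $\underline R^{\mathsf Y}_{m,n}$ is defined dually. A ranker $r=\mathsf Z_1\cdots \mathsf Z_k$ is condensed on $u$ if it is defined on $u$ and there is a strictly decreasing chain of open integer intervals $(0;|u|+1)=(i_0;j_0)\supset(i_1;j_1)\supset\cdots\supset(i_{k-1};j_{k-1})\ni r(u)$ such that for all $1\le h\le k-1$ the pair $(i_h,j_h)$ equals $(\mathsf X_c(u,i_{h-1}),j_{h-1})$ if $\mathsf Z_h\mathsf Z_{h+1}=\mathsf X_c\mathsf X_d$; $(i_{h-1},\mathsf Y_c(u,j_{h-1}))$ if $\mathsf Z_h\mathsf Z_{h+1}=\mathsf Y_c\mathsf Y_d$; $(i_{h-1},\mathsf X_c(u,i_{h-1}))$ if $\mathsf Z_h\mathsf Z_{h+1}=\mathsf X_c\mathsf Y_d$; and $(\mathsf Y_c(u,j_{h-1}),j_{h-1})$ if $\mathsf Z_h\mathsf Z_{h+1}=\mathsf Y_c\mathsf X_d$. Let $\mathsf Z\in\{\mathsf X,\mathsf Y\}$, let $r\in\underline R^{\mathsf Z}_{m,n}$ be defined but not condensed on a word $u$, and let $s$ be the maximal prefix of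 $r$ that is condensed on $u$. Then $s\ne r$, and there exist $\ell\ge 1$, letters $a,b,b_1,\dots,b_{\ell-1}$, a nonempty ranker $s_0\in\underline R^{\mathsf Z}_{m-1,n-\ell}$ and a (possibly empty) word $t$ over the alphabet of ranker letters such that one of the following holds: (i) $r=s\mathsf X_bt$, $s=s_0\mathsf Y_a\mathsf X_{b_1}\cdots\mathsf X_{b_{\ell-1}}$, and $s_0\mathsf Y_a(u)\le s(u)<s_0(u)\le s\mathsf X_b(u)$; moreover $s\mathsf X_b(u)=s_0(u)$ if the last letter of $s_0$ lies in $\{\mathsf X_b,\mathsf Y_b\}$, and $s\mathsf X_b(u)=s_0\mathsf X_b(u)$ otherwise; (ii) $r=s\mathsf Y_bt$, $s=s_0\mathsf X_a\mathsf Y_{b_1}\cdots\mathsf Y_{b_{\ell-1}}$, and $s_0\mathsf X_a(u)\ge s(u)>s_0(u)\ge s\mathsf Y_b(u)$; moreover $s\mathsf Y_b(u)=s_0(u)$ if the last letter of $s_0$ lies in $\{\mathsf X_b,\mathsf Y_b\}$, and $s\mathsf Y_b(u)=s_0\mathsf Y_b(u)$ otherwise. -/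

import Mathlib

namespace Rankers

/-- The two directions: `X` is to the right (future), `Y` is to the left (past). -/
inductive Dir where
  | X : Dir
  | Y : Dir

/-- The opposite direction. -/
def Dir.opp : Dir → Dir
  | .X => .Y
  | .Y => .X

/-- Ranker letters: `X a` (next `a` to the right) and `Y a` (next `a` to the left). -/
inductive RLetter (A : Type*) where
  | X : A → RLetter A
  | Y : A → RLetter A

/-- The direction of a ranker letter. -/
def RLetter.dir {A : Type*} : RLetter A → Dir
  | .X _ => .X
  | .Y _ => .Y

/-- `X_a(u,q)`: the least `a`-position of `u` strictly greater than `q`, `none` if there is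
none. Positions are `1, …, |u|`, and position `i` carries the letter `u[i-1]`. -/
def nextOcc {A : Type*} [DecidableEq A] (u : List A) (a : A) (q : ℕ) : Option ℕ :=
  (List.range' 1 u.length).find? (fun i => decide (q < i ∧ u[i - 1]? = some a))

/-- `Y_a(u,q)`: the greatest `a`-position of `u` strictly less than `q`, `none` if there is
none. -/
def prevOcc {A : Type*} [DecidableEq A] (u : List A) (a : A) (q : ℕ) : Option ℕ :=
  (List.range' 1 u.length).reverse.find? (fun i => decide (i < q ∧ u[i - 1]? = some a))

/-- One evaluation step `Z(u,q)`. -/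
def stepR {A : Type*} [DecidableEq A] (u : List A) : RLetter A → ℕ → Option ℕ
  | .X a, q => nextOcc u a q
  | .Y a, q => prevOcc u a q

/-- Evaluation `r(u,q)`, reading the letters from left to right. -/
def evalFrom {A : Type*} [DecidableEq A] (u : List A) : List (RLetter A) → ℕ → Option ℕ
  | [], q => some q
  | z :: r, q => (stepR u z q).bind (evalFrom u r)

/-- Starting position: `0` for an `X`-letter, `|u|+1` for a `Y`-letter. -/
def startPos {A : Type*} (u : List A) : RLetter A → ℕ
  | .X _ => 0
  | .Y _ => u.length + 1

/-- The position `r(u)`, `none` if undefined. Rankers are nonempty words, so the empty word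
gets the value `none`. -/
def evalR {A : Type*} [DecidableEq A] (u : List A) : List (RLetter A) → Option ℕ
  | [] => none
  | z :: t => evalFrom u (z :: t) (startPos u z)

/-- `r` is defined on `u`. -/
def Defined {A : Type*} [DecidableEq A] (u : List A) (r : List (RLetter A)) : Prop :=
  ∃ p, evalR u r = some p

/-- The number of blocks: a new block starts at each change of direction. -/
def numBlocks {A : Type*} : List (RLetter A) → ℕ
  | [] => 0
  | [_] => 1
  | .X _ :: .X b :: t => numBlocks (.X b :: t)
  | .Y _ :: .Y b :: t => numBlocks (.Y b :: t)
  | .X _ :: .Y b :: t => numBlocks (.Y b :: t) + 1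
  | .Y _ :: .X b :: t => numBlocks (.X b :: t) + 1

/-- `R^Z_{m,n}`: (nonempty) rankers with exactly `m` blocks and depth `n` whose first block is
a `Z`-block. -/
def R {A : Type*} (Z : Dir) (m n : ℕ) : Set (List (RLetter A)) :=
  {r | numBlocks r = m ∧ r.length = n ∧ ∃ c t, r = c :: t ∧ c.dir = Z}

/-- `uR^Z_{m,n}`: the union of the `R^Z_{m',n'}` with `m' ≤ m`, `n' ≤ n` and of the
`R^{Z'}_{m',n'}` with `m' < m`, `n' < n`, where `Z'` is the direction opposite to `Z`. -/
def uR {A : Type*} (Z : Dir) (m n : ℕ) : Set (List (RLetter A)) :=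
  {r | (∃ m' n', m' ≤ m ∧ n' ≤ n ∧ r ∈ R Z m' n') ∨
       (∃ m' n', m' < m ∧ n' < n ∧ r ∈ R Z.opp m' n')}

/-- `r = Z_1 ⋯ Z_n` is condensed on `u`: it is defined on `u` and there is a (strictly
decreasing) chain of open integer intervals
`(0;|u|+1) = (i_0;j_0) ⊃ (i_1;j_1) ⊃ ⋯ ⊃ (i_{n-1};j_{n-1}) ∋ r(u)` satisfying the four update
rules. With lists indexed from `0`, the letters `Z_{k+1}`, `Z_{k+2}` are `r[k]`, `r[k+1]`, and
they govern the step from `(i_k;j_k)` to `(i_{k+1};j_{k+1})`. -/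
def Condensed {A : Type*} [DecidableEq A] (u : List A) (r : List (RLetter A)) : Prop :=
  ∃ (p : ℕ) (i j : ℕ → ℕ),
    evalR u r = some p ∧
    i 0 = 0 ∧ j 0 = u.length + 1 ∧
    (∀ k, k + 1 < r.length →
      Set.Ioo (i (k + 1)) (j (k + 1)) ⊂ Set.Ioo (i k) (j k)) ∧
    p ∈ Set.Ioo (i (r.length - 1)) (j (r.length - 1)) ∧
    (∀ k a b, r[k]? = some (RLetter.X a) → r[k + 1]? = some (RLetter.X b) →
      nextOcc u a (i k) = some (i (k + 1)) ∧ j (k + 1) = j k) ∧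
    (∀ k a b, r[k]? = some (RLetter.Y a) → r[k + 1]? = some (RLetter.Y b) →
      i (k + 1) = i k ∧ prevOcc u a (j k) = some (j (k + 1))) ∧
    (∀ k a b, r[k]? = some (RLetter.X a) → r[k + 1]? = some (RLetter.Y b) →
      i (k + 1) = i k ∧ nextOcc u a (i k) = some (j (k + 1))) ∧
    (∀ k a b, r[k]? = some (RLetter.Y a) → r[k + 1]? = some (RLetter.X b) →
      prevOcc u a (j k) = some (i (k + 1)) ∧ j (k + 1) = j k)

/-- `s` is the maximal (longest) prefix of `r` that is condensed on `u`. -/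
def IsMaxCondensedPrefix {A : Type*} [DecidableEq A] (u : List A)
    (r s : List (RLetter A)) : Prop :=
  s <+: r ∧ Condensed u s ∧
    ∀ s' : List (RLetter A), s' <+: r → Condensed u s' → s'.length ≤ s.length

/-- The last letter of the ranker `s` is `X_b` or `Y_b`. -/
def EndsWith {A : Type*} (s : List (RLetter A)) (b : A) : Prop :=
  s.getLast? = some (RLetter.X b) ∨ s.getLast? = some (RLetter.Y b)

end Rankers

open Rankers

/-! How a ranker condensed on `u` continues depends only on its value `p` and on the last interval
`(i;j)` of its chain: appending a letter first cuts `(i;j)` at `p`, keeping the side towards which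
the new letter moves, and the result is condensed iff the new value lies in the part that is kept.
If it does not, the new letter, say `X_b`, has reached or passed the endpoint `j`. As `j ≠ |u|+1`,
this endpoint was set by the last `Y`-letter, so it is the value of the prefix `s₀` in front of that
letter, and no `b` occurs strictly between `s(u)` and `s₀(u)`. -/

namespace Rankers

variable {A : Type*}

section Directions

@[simp]
theorem Dir.opp_opp (d : Dir) : d.opp.opp = d := by cases d <;> rfl

theorem Dir.eq_or_eq_opp (d e : Dir) : e = d ∨ e = d.opp := by
  cases d <;> cases e <;> simp [Dir.opp]

/-- The letter `X_a` or `Y_a`, according to the direction. Writing letters in this way lets the two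
dual halves of an argument be treated at once. -/
def Dir.letter : Dir → A → RLetter A
  | .X => .X
  | .Y => .Y

@[simp]
theorem dir_letter (d : Dir) (a : A) : (d.letter a).dir = d := by cases d <;> rfl

theorem RLetter.exists_eq_letter (z : RLetter A) : ∃ a, z = z.dir.letter a := by
  cases z with
  | X a => exact ⟨a, rfl⟩
  | Y a => exact ⟨a, rfl⟩

theorem endsWith_concat_letter_iff {t : List (RLetter A)} {d : Dir} {a b : A} :
    EndsWith (t ++ [d.letter a]) b ↔ a = b := by
  cases d <;> simp [EndsWith, Dir.letter]

/-- The coordinate of a position as seen when moving in a given direction: it increases along that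
direction, so `d.coord p < d.coord q` says that `q` comes after `p` in direction `d`. -/
def Dir.coord : Dir → ℕ → ℤ
  | .X, p => p
  | .Y, p => -p

theorem Dir.coord_opp (d : Dir) (p : ℕ) : d.opp.coord p = -d.coord p := by
  cases d <;> simp [Dir.opp, Dir.coord]

theorem Dir.coord_injective (d : Dir) : Function.Injective d.coord := by
  cases d <;> intro p q h <;> simpa [Dir.coord] using h

/-- The endpoint of the interval `(i;j)`, represented by the pair `I = (i, j)`, from which one
enters the interval when moving in a given direction. -/
def Dir.endpoint : Dir → ℕ × ℕ → ℕ
  | .X, I => I.1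
  | .Y, I => I.2

theorem startPos_eq_endpoint (u : List A) (z : RLetter A) :
    startPos u z = z.dir.endpoint (0, u.length + 1) := by
  cases z <;> rfl

/-- The part of an interval that lies after the position `p` in a given direction. -/
def Dir.cut : Dir → ℕ → ℕ × ℕ → ℕ × ℕ
  | .X, p, I => (p, I.2)
  | .Y, p, I => (I.1, p)

@[simp]
theorem Dir.endpoint_cut (d : Dir) (p : ℕ) (I : ℕ × ℕ) : d.endpoint (d.cut p I) = p := by
  cases d <;> rfl

@[simp]
theorem Dir.endpoint_opp_cut (d : Dir) (p : ℕ) (I : ℕ × ℕ) :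
    d.opp.endpoint (d.cut p I) = d.opp.endpoint I := by
  cases d <;> rfl

theorem mem_Ioo_iff_coord (d : Dir) {I : ℕ × ℕ} {q : ℕ} :
    q ∈ Set.Ioo I.1 I.2 ↔
      d.coord (d.endpoint I) < d.coord q ∧ d.coord q < d.coord (d.opp.endpoint I) := by
  cases d <;> simp [Dir.endpoint, Dir.opp, Dir.coord, and_comm]

theorem Ioo_cut_ssubset_Ioo_iff {d : Dir} {p q : ℕ} {I : ℕ × ℕ}
    (hq : q ∈ Set.Ioo (d.cut p I).1 (d.cut p I).2) :
    Set.Ioo (d.cut p I).1 (d.cut p I).2 ⊂ Set.Ioo I.1 I.2 ↔ p ∈ Set.Ioo I.1 I.2 := by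
  simp only [ssubset_iff_subset_not_subset, Set.subset_def, mem_Ioo_iff_coord d, Dir.endpoint_cut,
    Dir.endpoint_opp_cut] at hq ⊢
  constructor
  · rintro ⟨-, h⟩
    refine ⟨?_, hq.1.trans hq.2⟩
    by_contra! hp
    exact h fun x hx => ⟨hp.trans_lt hx.1, hx.2⟩
  · intro hp
    exact ⟨fun x hx => ⟨hp.1.trans hx.1, hx.2⟩, fun h => (h p hp).1.false⟩

end Directions

section Evaluation

theorem find?_eq_some_iff_of_pairwise {α : Type*} {R : α → α → Prop} [Std.Asymm R] {l : List α}
    (hl : l.Pairwise R) {P : α → Bool} {x : α} :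
    l.find? P = some x ↔ x ∈ l ∧ P x ∧ ∀ y ∈ l, R y x → ¬ P y := by
  induction l with
  | nil => simp
  | cons c l ih =>
    obtain ⟨hc, hl⟩ := List.pairwise_cons.1 hl
    have hasymm : ∀ y, R c y → ¬ R y c := fun y => Std.Asymm.asymm c y
    grind

variable [DecidableEq A] {u : List A}

theorem stepR_letter_eq_some_iff {d : Dir} {a : A} {q p : ℕ} :
    stepR u (d.letter a) q = some p ↔
      p ∈ Set.Ioo 0 (u.length + 1) ∧ d.coord q < d.coord p ∧ u[p - 1]? = some a ∧
        ∀ x, d.coord q < d.coord x → d.coord x < d.coord p → u[x - 1]? ≠ some a := by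
  have hsorted : (List.range' 1 u.length).Pairwise (· < ·) := List.pairwise_lt_range'
  cases d with
  | X =>
    simp only [Dir.letter, stepR, nextOcc, Dir.coord, find?_eq_some_iff_of_pairwise hsorted]
    grind
  | Y =>
    simp only [Dir.letter, stepR, prevOcc, Dir.coord,
      find?_eq_some_iff_of_pairwise (List.pairwise_reverse.2 hsorted)]
    grind

theorem coord_lt_of_stepR {z : RLetter A} {q p : ℕ} (h : stepR u z q = some p) :
    z.dir.coord q < z.dir.coord p := by
  obtain ⟨a, hz⟩ := z.exists_eq_letter
  rw [hz] at h
  exact (stepR_letter_eq_some_iff.1 h).2.1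

theorem mem_Ioo_of_stepR {z : RLetter A} {q p : ℕ} (h : stepR u z q = some p) :
    p ∈ Set.Ioo 0 (u.length + 1) := by
  obtain ⟨a, hz⟩ := z.exists_eq_letter
  rw [hz] at h
  exact (stepR_letter_eq_some_iff.1 h).1

theorem eq_of_stepR_of_getElem? {d : Dir} {b : A} {p p₀ q : ℕ}
    (h : stepR u (d.letter b) p = some q) (hp : d.coord p < d.coord p₀)
    (hq : d.coord p₀ ≤ d.coord q) (hb : u[p₀ - 1]? = some b) : q = p₀ := by
  by_contra hne
  have hlt : d.coord p₀ < d.coord q := hq.lt_of_ne fun h => hne (d.coord_injective h).symm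
  exact (stepR_letter_eq_some_iff.1 h).2.2.2 p₀ hp hlt hb

theorem stepR_of_stepR_of_getElem?_ne {d : Dir} {b : A} {p p₀ q : ℕ}
    (h : stepR u (d.letter b) p = some q) (hp : d.coord p < d.coord p₀)
    (hq : d.coord p₀ ≤ d.coord q) (hb : u[p₀ - 1]? ≠ some b) :
    stepR u (d.letter b) p₀ = some q := by
  obtain ⟨hmem, -, hqb, hfirst⟩ := stepR_letter_eq_some_iff.1 h
  have hlt : d.coord p₀ < d.coord q :=
    hq.lt_of_ne fun h => hb (d.coord_injective h ▸ hqb)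
  exact stepR_letter_eq_some_iff.2 ⟨hmem, hlt, hqb, fun x hx => hfirst x (hp.trans hx)⟩

theorem evalFrom_append (r t : List (RLetter A)) (q : ℕ) :
    evalFrom u (r ++ t) q = (evalFrom u r q).bind (evalFrom u t) := by
  induction r generalizing q with
  | nil => rfl
  | cons z r ih => simp only [List.cons_append, evalFrom, Option.bind_assoc, ih]

theorem evalR_append {r : List (RLetter A)} (hr : r ≠ []) (t : List (RLetter A)) :
    evalR u (r ++ t) = (evalR u r).bind (evalFrom u t) := by
  cases r with
  | nil => contradiction
  | cons z r => exact evalFrom_append (z :: r) t _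

theorem evalR_concat {r : List (RLetter A)} (hr : r ≠ []) (z : RLetter A) :
    evalR u (r ++ [z]) = (evalR u r).bind (stepR u z) := by
  simp [evalR_append hr, evalFrom]

theorem evalR_singleton (z : RLetter A) : evalR u [z] = stepR u z (startPos u z) := by
  simp [evalR, evalFrom]

theorem Defined.of_prefix {r s : List (RLetter A)} (h : Defined u r) (hsr : s <+: r)
    (hs : s ≠ []) : Defined u s := by
  obtain ⟨t, rfl⟩ := hsr
  obtain ⟨p, hp⟩ := h
  rw [evalR_append hs] at hp
  obtain ⟨q, hq, -⟩ := Option.bind_eq_some_iff.1 hp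
  exact ⟨q, hq⟩

theorem exists_stepR_of_evalR_concat {t : List (RLetter A)} {z : RLetter A} {p : ℕ}
    (h : evalR u (t ++ [z]) = some p) : ∃ q, stepR u z q = some p := by
  rcases eq_or_ne t [] with rfl | ht
  · exact ⟨_, by simpa only [List.nil_append, evalR_singleton] using h⟩
  · rw [evalR_concat ht] at h
    obtain ⟨q, -, hq⟩ := Option.bind_eq_some_iff.1 h
    exact ⟨q, hq⟩

theorem getElem?_evalR_eq_some_iff {r : List (RLetter A)} {p : ℕ} {b : A}
    (h : evalR u r = some p) : u[p - 1]? = some b ↔ EndsWith r b := by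
  rcases List.eq_nil_or_concat' r with rfl | ⟨t, z, rfl⟩
  · simp [evalR] at h
  obtain ⟨q, hq⟩ := exists_stepR_of_evalR_concat h
  obtain ⟨a, hz⟩ := z.exists_eq_letter
  rw [hz] at hq ⊢
  rw [(stepR_letter_eq_some_iff.1 hq).2.2.1, Option.some_inj, endsWith_concat_letter_iff]

end Evaluation

section Condensed

variable [DecidableEq A] {u : List A} {s : List (RLetter A)}

/-- The interval chains of `Condensed`, with the pair `I k` in place of `(i_k;j_k)`. The four update
rules become one: the `k`-th letter, read from its side of the interval, gives the position at which
the interval is cut, and the next letter decides which part is kept. -/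
structure IsIntervalChain (u : List A) (s : List (RLetter A)) (I : ℕ → ℕ × ℕ) : Prop where
  zero : I 0 = (0, u.length + 1)
  ssubset : ∀ k, k + 1 < s.length → Set.Ioo (I (k + 1)).1 (I (k + 1)).2 ⊂ Set.Ioo (I k).1 (I k).2
  succ : ∀ k y z, s[k]? = some y → s[k + 1]? = some z →
    ∃ q, stepR u y (y.dir.endpoint (I k)) = some q ∧ I (k + 1) = z.dir.cut q (I k)

theorem condensed_iff_exists_isIntervalChain :
    Condensed u s ↔ ∃ p I, evalR u s = some p ∧ IsIntervalChain u s I ∧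
      p ∈ Set.Ioo (I (s.length - 1)).1 (I (s.length - 1)).2 := by
  constructor
  · rintro ⟨p, i, j, hp, hi, hj, hsub, hmem, hXX, hYY, hXY, hYX⟩
    refine ⟨p, fun k => (i k, j k), hp, ⟨by simp [hi, hj], hsub, ?_⟩, hmem⟩
    rintro k (a | a) (b | b) hy hz <;>
      simp only [stepR, RLetter.dir, Dir.endpoint, Dir.cut, Prod.mk.injEq] <;> grind
  · rintro ⟨p, I, hp, hI, hmem⟩
    refine ⟨p, fun k => (I k).1, fun k => (I k).2, hp, by simp [hI.zero], by simp [hI.zero],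
      hI.ssubset, hmem, ?_⟩
    refine ⟨?_, ?_, ?_, ?_⟩ <;> intro k a b hy hz <;>
      obtain ⟨q, hq, hcut⟩ := hI.succ k _ _ hy hz <;>
      simpa [hcut, Dir.cut, RLetter.dir, stepR, Dir.endpoint] using hq

/-- `CondensedAt u s I p` says that `s` is condensed on `u`, with value `s(u) = p` and with `I` the
last interval of its chain. -/
inductive CondensedAt (u : List A) : List (RLetter A) → ℕ × ℕ → ℕ → Prop
  | singleton {z : RLetter A} {p : ℕ} : stepR u z (startPos u z) = some p →
      CondensedAt u [z] (0, u.length + 1) p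
  | concat {s : List (RLetter A)} {I : ℕ × ℕ} {p q : ℕ} {z : RLetter A} : CondensedAt u s I p →
      stepR u z p = some q → q ∈ Set.Ioo (z.dir.cut p I).1 (z.dir.cut p I).2 →
      CondensedAt u (s ++ [z]) (z.dir.cut p I) q

namespace CondensedAt

variable {I J : ℕ × ℕ} {p q : ℕ}

theorem ne_nil (h : CondensedAt u s I p) : s ≠ [] := by
  cases h <;> simp

theorem evalR_eq (h : CondensedAt u s I p) : evalR u s = some p := by
  induction h with
  | singleton h => rwa [evalR_singleton]
  | concat hs h _ ih => rwa [evalR_concat hs.ne_nil, ih]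

theorem mem_Ioo (h : CondensedAt u s I p) : p ∈ Set.Ioo I.1 I.2 := by
  cases h with
  | singleton h => exact mem_Ioo_of_stepR h
  | concat _ _ hq => exact hq

theorem eq_of_singleton {z : RLetter A} (h : CondensedAt u [z] I p) : I = (0, u.length + 1) := by
  generalize ht : [z] = t at h
  cases h with
  | singleton => rfl
  | concat hs => simp_all [List.singleton_eq_append_iff, hs.ne_nil]

theorem of_concat {z : RLetter A} (h : CondensedAt u (s ++ [z]) J q) (hs : s ≠ []) :
    ∃ I p, CondensedAt u s I p ∧ J = z.dir.cut p I := by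
  generalize ht : s ++ [z] = t at h
  cases h with
  | singleton => simp_all [List.append_eq_singleton_iff]
  | concat h =>
    obtain ⟨rfl, hz⟩ := List.append_inj' ht rfl
    obtain rfl := List.singleton_inj.1 hz
    exact ⟨_, _, h, rfl⟩

theorem interval_unique (h : CondensedAt u s I p) (h' : CondensedAt u s J q) : I = J := by
  induction h generalizing J q with
  | singleton _ => exact h'.eq_of_singleton.symm
  | concat h _ _ ih =>
    obtain ⟨I', p', hs, rfl⟩ := h'.of_concat h.ne_nil
    rw [ih hs, Option.some_inj.1 (h.evalR_eq.symm.trans hs.evalR_eq)]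

theorem stepR_endpoint {z : RLetter A} (h : CondensedAt u s I p) (hz : s.getLast? = some z) :
    stepR u z (z.dir.endpoint I) = some p := by
  cases h with
  | singleton h =>
    obtain rfl := Option.some_inj.1 hz
    rwa [← startPos_eq_endpoint]
  | concat _ h _ =>
    obtain rfl := Option.some_inj.1 (List.getLast?_concat.symm.trans hz)
    rwa [Dir.endpoint_cut]

theorem of_prefix {t : List (RLetter A)} (h : CondensedAt u s I p) (hts : t <+: s) (ht : t ≠ []) :
    ∃ J q, CondensedAt u t J q := by
  induction h with
  | singleton h =>
    obtain rfl : t = [_] := by simpa [List.prefix_cons_iff, ht] using hts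
    exact ⟨_, _, .singleton h⟩
  | concat h hq hmem ih =>
    rcases List.prefix_concat_iff.1 hts with rfl | hts
    · exact ⟨_, _, h.concat hq hmem⟩
    · exact ih hts

theorem exists_isIntervalChain (h : CondensedAt u s I p) :
    ∃ K, IsIntervalChain u s K ∧ K (s.length - 1) = I := by
  have hpre : ∀ k, ∃ J q, CondensedAt u (s.take (k + 1)) J q := fun k =>
    h.of_prefix (List.take_prefix _ _) (by simp [h.ne_nil])
  choose K P hK using hpre
  have hsucc : ∀ k y z, s[k]? = some y → s[k + 1]? = some z →
      stepR u y (y.dir.endpoint (K k)) = some (P k) ∧ K (k + 1) = z.dir.cut (P k) (K k) := by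
    intro k y z hy hz
    have hlast : (s.take (k + 1)).getLast? = some y := by simp [List.getLast?_take, hy]
    have hconcat := hK (k + 1)
    rw [List.take_add_one, hz] at hconcat
    obtain ⟨J, q, hJ, hcut⟩ := hconcat.of_concat (hK k).ne_nil
    refine ⟨(hK k).stepR_endpoint hlast, ?_⟩
    rw [hcut, hJ.interval_unique (hK k), Option.some_inj.1 (hJ.evalR_eq.symm.trans (hK k).evalR_eq)]
  refine ⟨K, ⟨?_, ?_, fun k y z hy hz => ⟨P k, hsucc k y z hy hz⟩⟩, ?_⟩
  · obtain ⟨z, t, rfl⟩ := List.exists_cons_of_ne_nil h.ne_nil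
    exact (hK 0).eq_of_singleton
  · intro k hk
    have hcut := (hsucc k _ _ (List.getElem?_eq_getElem (by omega)) (List.getElem?_eq_getElem hk)).2
    have hmem := (hK (k + 1)).mem_Ioo
    rw [hcut] at hmem ⊢
    exact (Ioo_cut_ssubset_Ioo_iff hmem).2 (hK k).mem_Ioo
  · have hfull := hK (s.length - 1)
    rw [List.take_of_length_le (by omega)] at hfull
    exact hfull.interval_unique h

end CondensedAt

namespace IsIntervalChain

variable {K : ℕ → ℕ × ℕ} {p : ℕ}

theorem of_append {t : List (RLetter A)} (h : IsIntervalChain u (s ++ t) K) :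
    IsIntervalChain u s K where
  zero := h.zero
  ssubset k hk := h.ssubset k (by grind)
  succ k y z hy hz := h.succ k y z (by grind) (by grind)

theorem exists_cut {y z : RLetter A} (h : IsIntervalChain u (s ++ [y] ++ [z]) K) :
    ∃ q, stepR u y (y.dir.endpoint (K s.length)) = some q ∧
      K (s.length + 1) = z.dir.cut q (K s.length) :=
  h.succ s.length y z (by simp) (by simp)

theorem evalR_concat {z : RLetter A} (h : IsIntervalChain u (s ++ [z]) K) :
    evalR u (s ++ [z]) = stepR u z (z.dir.endpoint (K s.length)) := by
  induction s using List.reverseRecOn generalizing z with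
  | nil => simp [evalR_singleton, startPos_eq_endpoint, h.zero]
  | append_singleton s y ih =>
    obtain ⟨q, hq, hcut⟩ := h.exists_cut
    rw [Rankers.evalR_concat (by simp), ih h.of_append, hq]
    simp [hcut]

theorem condensedAt {z : RLetter A} (h : IsIntervalChain u (s ++ [z]) K)
    (hp : evalR u (s ++ [z]) = some p) (hmem : p ∈ Set.Ioo (K s.length).1 (K s.length).2) :
    CondensedAt u (s ++ [z]) (K s.length) p := by
  induction s using List.reverseRecOn generalizing z p with
  | nil =>
    rw [List.length_nil, h.zero]
    exact .singleton (by rwa [← evalR_singleton])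
  | append_singleton s y ih =>
    obtain ⟨q, hq, hcut⟩ := h.exists_cut
    have heval : evalR u (s ++ [y]) = some q := by rw [h.of_append.evalR_concat, hq]
    have hsub := h.ssubset s.length (by simp)
    simp only [List.length_append, List.length_singleton] at hmem ⊢
    rw [hcut] at hmem hsub ⊢
    have hq_mem := (Ioo_cut_ssubset_Ioo_iff hmem).1 hsub
    refine (ih h.of_append heval hq_mem).concat ?_ hmem
    rwa [Rankers.evalR_concat (by simp), heval] at hp

end IsIntervalChain

theorem condensed_iff_exists_condensedAt : Condensed u s ↔ ∃ I p, CondensedAt u s I p := by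
  rw [condensed_iff_exists_isIntervalChain]
  constructor
  · rintro ⟨p, K, hp, hK, hmem⟩
    rcases List.eq_nil_or_concat' s with rfl | ⟨t, z, rfl⟩
    · simp [evalR] at hp
    · exact ⟨_, p, hK.condensedAt hp (by simpa using hmem)⟩
  · rintro ⟨I, p, h⟩
    obtain ⟨K, hK, rfl⟩ := h.exists_isIntervalChain
    exact ⟨p, K, h.evalR_eq, hK, h.mem_Ioo⟩

end Condensed

section Factorization

variable [DecidableEq A] {u : List A} {s : List (RLetter A)} {I : ℕ × ℕ} {p : ℕ}

theorem CondensedAt.exists_eq_append_letter (h : CondensedAt u s I p) {d : Dir}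
    (hI : d.endpoint I ≠ d.endpoint (0, u.length + 1)) :
    ∃ (s₀ : List (RLetter A)) (a : A) (bs : List A) (pa : ℕ), s₀ ≠ [] ∧
      s = s₀ ++ d.letter a :: bs.map d.opp.letter ∧ evalR u s₀ = some (d.endpoint I) ∧
      evalR u (s₀ ++ [d.letter a]) = some pa ∧ d.coord p ≤ d.coord pa := by
  induction h with
  | singleton _ => contradiction
  | @concat s I p q z h hq hmem ih =>
    have heval := (h.concat hq hmem).evalR_eq
    have hlt := coord_lt_of_stepR hq
    obtain ⟨c, hz⟩ := z.exists_eq_letter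
    rcases d.eq_or_eq_opp z.dir with hd | hd <;> rw [hd] at hz hI hlt ⊢
    · subst hz
      exact ⟨s, c, [], q, h.ne_nil, rfl, by simpa using h.evalR_eq, heval, le_rfl⟩
    · have hend : d.endpoint (d.opp.cut p I) = d.endpoint I := by
        simpa using d.opp.endpoint_opp_cut p I
      rw [hend] at hI ⊢
      obtain ⟨s₀, a, bs, pa, h₀, rfl, hs₀, hpa, hle⟩ := ih hI
      rw [d.coord_opp, d.coord_opp] at hlt
      exact ⟨s₀, a, bs ++ [c], pa, h₀, by simp [hz], hs₀, hpa, by omega⟩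

theorem CondensedAt.exists_factorization_of_notMem (h : CondensedAt u s I p) {d : Dir} {b : A}
    {q : ℕ} (hq : stepR u (d.letter b) p = some q)
    (hnot : q ∉ Set.Ioo (d.cut p I).1 (d.cut p I).2) :
    ∃ (a : A) (bs : List A) (s₀ : List (RLetter A)) (pa p₀ : ℕ),
      s₀ ≠ [] ∧ s = s₀ ++ d.opp.letter a :: bs.map d.letter ∧
      evalR u (s₀ ++ [d.opp.letter a]) = some pa ∧ evalR u s₀ = some p₀ ∧
      d.coord pa ≤ d.coord p ∧ d.coord p < d.coord p₀ ∧ d.coord p₀ ≤ d.coord q ∧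
      (EndsWith s₀ b → q = p₀) ∧ (¬ EndsWith s₀ b → evalR u (s₀ ++ [d.letter b]) = some q) := by
  have hlt : d.coord p < d.coord q := by simpa using coord_lt_of_stepR hq
  have hp := ((mem_Ioo_iff_coord d).1 h.mem_Ioo).2
  have hle : d.coord (d.opp.endpoint I) ≤ d.coord q := by
    rw [mem_Ioo_iff_coord d, Dir.endpoint_cut, Dir.endpoint_opp_cut] at hnot
    exact not_lt.1 fun hlt' => hnot ⟨hlt, hlt'⟩
  have hend : d.opp.endpoint I ≠ d.opp.endpoint (0, u.length + 1) := fun heq =>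
    hle.not_gt (heq ▸ ((mem_Ioo_iff_coord d).1 (mem_Ioo_of_stepR hq)).2)
  obtain ⟨s₀, a, bs, pa, h₀, hs, hs₀, hpa, hpa_le⟩ := h.exists_eq_append_letter hend
  rw [Dir.opp_opp] at hs
  rw [d.coord_opp, d.coord_opp, neg_le_neg_iff] at hpa_le
  refine ⟨a, bs, s₀, pa, _, h₀, hs, hpa, hs₀, hpa_le, hp, hle, fun hb => ?_, fun hb => ?_⟩
  · exact eq_of_stepR_of_getElem? hq hp hle ((getElem?_evalR_eq_some_iff hs₀).2 hb)
  · rw [evalR_concat h₀, hs₀]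
    exact stepR_of_stepR_of_getElem?_ne hq hp hle (mt (getElem?_evalR_eq_some_iff hs₀).1 hb)

theorem IsMaxCondensedPrefix.exists_eq_append_cons {r : List (RLetter A)}
    (hs : IsMaxCondensedPrefix u r s) (hne : s ≠ r) :
    ∃ z t, r = s ++ z :: t ∧ ¬ Condensed u (s ++ [z]) := by
  obtain ⟨⟨t, rfl⟩, -, hmax⟩ := hs
  cases t with
  | nil => simp at hne
  | cons z t =>
    refine ⟨z, t, rfl, fun h => ?_⟩
    simpa using hmax (s ++ [z]) ⟨t, by simp⟩ h

end Factorization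

section Blocks

theorem numBlocks_cons_cons_of_dir_eq {y z : RLetter A} (h : y.dir = z.dir)
    (t : List (RLetter A)) : numBlocks (y :: z :: t) = numBlocks (z :: t) := by
  cases y <;> cases z <;> first | rfl | contradiction

theorem numBlocks_cons_cons_of_dir_ne {y z : RLetter A} (h : y.dir ≠ z.dir)
    (t : List (RLetter A)) : numBlocks (y :: z :: t) = numBlocks (z :: t) + 1 := by
  cases y <;> cases z <;> first | rfl | contradiction

theorem one_le_numBlocks_cons (z : RLetter A) (t : List (RLetter A)) :
    1 ≤ numBlocks (z :: t) := by
  induction t generalizing z with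
  | nil => exact le_rfl
  | cons y t ih =>
    by_cases h : z.dir = y.dir
    · exact numBlocks_cons_cons_of_dir_eq h t ▸ ih y
    · simp [numBlocks_cons_cons_of_dir_ne h]

theorem dir_eq_of_numBlocks_cons_le_one {z : RLetter A} {t : List (RLetter A)}
    (h : numBlocks (z :: t) ≤ 1) : ∀ y ∈ t, y.dir = z.dir := by
  induction t generalizing z with
  | nil => simp
  | cons w t ih =>
    by_cases hzw : z.dir = w.dir
    · rw [numBlocks_cons_cons_of_dir_eq hzw] at h
      simpa [hzw] using ih h
    · have := one_le_numBlocks_cons w t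
      rw [numBlocks_cons_cons_of_dir_ne hzw] at h
      omega

theorem numBlocks_add_le (s t : List (RLetter A)) :
    numBlocks s + numBlocks t ≤ numBlocks (s ++ t) + 1 := by
  induction s with
  | nil => simp [numBlocks]
  | cons y s ih =>
    rcases s with _ | ⟨z, s⟩
    · rcases t with _ | ⟨w, t⟩
      · simp [numBlocks]
      · by_cases h : y.dir = w.dir
        · simp [numBlocks_cons_cons_of_dir_eq h, numBlocks, add_comm]
        · simp only [List.singleton_append, numBlocks_cons_cons_of_dir_ne h, numBlocks]
          omega
    · by_cases h : y.dir = z.dir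
      · simpa [numBlocks_cons_cons_of_dir_eq h] using ih
      · simp only [List.cons_append, numBlocks_cons_cons_of_dir_ne h] at ih ⊢
        omega

theorem numBlocks_lt_numBlocks_append {s t : List (RLetter A)} {y z : RLetter A} (hy : y ∈ t)
    (hz : z ∈ t) (hyz : y.dir ≠ z.dir) : numBlocks s < numBlocks (s ++ t) := by
  have htwo : 2 ≤ numBlocks t := by
    by_contra! hlt
    obtain ⟨w, t, rfl⟩ := List.exists_cons_of_ne_nil (List.ne_nil_of_mem hy)
    have hdir : ∀ x ∈ w :: t, x.dir = w.dir := by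
      simpa using dir_eq_of_numBlocks_cons_le_one (Nat.le_of_lt_succ hlt)
    exact hyz ((hdir y hy).trans (hdir z hz).symm)
  have := numBlocks_add_le s t
  omega

theorem cons_mem_uR_iff {Z : Dir} {m n : ℕ} {z : RLetter A} {r : List (RLetter A)} :
    z :: r ∈ uR Z m n ↔
      (z.dir = Z ∧ numBlocks (z :: r) ≤ m ∧ (z :: r).length ≤ n) ∨
      (z.dir = Z.opp ∧ numBlocks (z :: r) < m ∧ (z :: r).length < n) := by
  simp only [uR, R, Set.mem_ofPred_eq, List.cons.injEq]
  grind

theorem mem_uR_of_append {Z : Dir} {m n l : ℕ} {s t : List (RLetter A)} (hs : s ≠ [])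
    (hblocks : numBlocks s < numBlocks (s ++ t)) (hl : l ≤ t.length) (h : s ++ t ∈ uR Z m n) :
    s ∈ uR Z (m - 1) (n - l) := by
  obtain ⟨z, s, rfl⟩ := List.exists_cons_of_ne_nil hs
  have hlen : (z :: s ++ t).length = (z :: s).length + t.length := List.length_append
  rw [List.cons_append] at h hblocks hlen
  refine cons_mem_uR_iff.2 ((cons_mem_uR_iff.1 h).imp ?_ ?_) <;>
    exact And.imp_right fun _ => ⟨by omega, by omega⟩

end Blocks

end Rankers

theorem statement5 {A : Type*} [DecidableEq A] (Z : Dir) (m n : ℕ) (u : List A)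
    (r s : List (RLetter A)) (hr : r ∈ uR Z m n) (hdef : Defined u r)
    (hncond : ¬ Condensed u r) (hs : IsMaxCondensedPrefix u r s) :
    s ≠ r ∧
    ∃ (l : ℕ) (a b : A) (bs : List A) (s₀ t : List (RLetter A)),
      1 ≤ l ∧ bs.length = l - 1 ∧ s₀ ≠ [] ∧ s₀ ∈ uR Z (m - 1) (n - l) ∧
      ((r = s ++ RLetter.X b :: t ∧
        s = s₀ ++ RLetter.Y a :: bs.map RLetter.X ∧
        ∃ pa ps p₀ pb : ℕ,
          evalR u (s₀ ++ [RLetter.Y a]) = some pa ∧ evalR u s = some ps ∧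
          evalR u s₀ = some p₀ ∧ evalR u (s ++ [RLetter.X b]) = some pb ∧
          pa ≤ ps ∧ ps < p₀ ∧ p₀ ≤ pb ∧
          (EndsWith s₀ b → pb = p₀) ∧
          (¬ EndsWith s₀ b → evalR u (s₀ ++ [RLetter.X b]) = some pb)) ∨
       (r = s ++ RLetter.Y b :: t ∧
        s = s₀ ++ RLetter.X a :: bs.map RLetter.Y ∧
        ∃ pa ps p₀ pb : ℕ,
          evalR u (s₀ ++ [RLetter.X a]) = some pa ∧ evalR u s = some ps ∧
          evalR u s₀ = some p₀ ∧ evalR u (s ++ [RLetter.Y b]) = some pb ∧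
          ps ≤ pa ∧ p₀ < ps ∧ pb ≤ p₀ ∧
          (EndsWith s₀ b → pb = p₀) ∧
          (¬ EndsWith s₀ b → evalR u (s₀ ++ [RLetter.Y b]) = some pb))) := by
  have hne : s ≠ r := fun h => hncond (h ▸ hs.2.1)
  obtain ⟨z, t, rfl, hz⟩ := hs.exists_eq_append_cons hne
  obtain ⟨d, b, rfl⟩ : ∃ (d : Dir) (b : A), z = d.letter b := ⟨_, z.exists_eq_letter⟩
  obtain ⟨I, p, h⟩ := condensed_iff_exists_condensedAt.1 hs.2.1
  obtain ⟨q, hq⟩ : Defined u (s ++ [d.letter b]) := hdef.of_prefix ⟨t, by simp⟩ (by simp)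
  have hstep : stepR u (d.letter b) p = some q := by rwa [evalR_concat h.ne_nil, h.evalR_eq] at hq
  have hnot : q ∉ Set.Ioo (d.cut p I).1 (d.cut p I).2 := fun hmem =>
    hz (condensed_iff_exists_condensedAt.2 ⟨_, q, h.concat hstep (by rwa [dir_letter])⟩)
  obtain ⟨a, bs, s₀, pa, p₀, h₀, rfl, hpa, hp₀, hpa_le, hp_lt, hp₀_le, heq, hev⟩ :=
    h.exists_factorization_of_notMem hstep hnot
  have hmem : s₀ ∈ uR Z (m - 1) (n - (bs.length + 1)) := by
    rw [List.append_assoc] at hr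
    refine mem_uR_of_append h₀ (numBlocks_lt_numBlocks_append (y := d.opp.letter a)
      (z := d.letter b) (by simp) (by simp) ?_) (by simp) hr
    cases d <;> simp [Dir.opp]
  refine ⟨hne, bs.length + 1, a, b, bs, s₀, t, by simp, by simp, h₀, hmem, ?_⟩
  cases d <;> simp only [Dir.coord, neg_le_neg_iff, neg_lt_neg_iff, Nat.cast_le, Nat.cast_lt]
    at hpa_le hp_lt hp₀_le
  · exact .inl ⟨rfl, rfl, pa, p, p₀, q, hpa, h.evalR_eq, hp₀, hq, hpa_le, hp_lt, hp₀_le, heq, hev⟩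
  · exact .inr ⟨rfl, rfl, pa, p, p₀, q, hpa, h.evalR_eq, hp₀, hq, hpa_le, hp_lt, hp₀_le, heq, hev⟩
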